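/- Suppose every 5-edge-connected planar graph is Z_3-extendable at every vertex of degree 5. Then every 5-edge-connected graph with crossing number at most one is Z_3-connected. -/

import Mathlib

open Finset

/-- A finite multigraph without loops: each edge `e` has two distinct
endpoints `fst e` and `snd e`.  An orientation is a map `D : E → Bool`,
where `D e = true` means `e` is directed from `fst e` to `snd e`. -/
structure Multigraph (V : Type) (E : Type) where
  fst : E → V
  snd : E → V
  no_loop : ∀ e, fst e ≠ snd e

namespace Multigraph

variable {V E : Type} [Fintype V] [DecidableEq V] [Fintype E] [DecidableEq E]

/-- The tail (initial vertex) of edge `e` under orientation `D`. -/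
def tail (G : Multigraph V E) (D : E → Bool) (e : E) : V :=
  if D e then G.fst e else G.snd e

/-- The head (terminal vertex) of edge `e` under orientation `D`. -/
def head (G : Multigraph V E) (D : E → Bool) (e : E) : V :=
  if D e then G.snd e else G.fst e

/-- Outdegree `d⁺_D(v)` (as an integer, for convenience). -/
def outDeg (G : Multigraph V E) (D : E → Bool) (v : V) : ℤ :=
  ((univ.filter fun e => G.tail D e = v).card : ℤ)

/-- Indegree `d⁻_D(v)`. -/
def inDeg (G : Multigraph V E) (D : E → Bool) (v : V) : ℤ :=
  ((univ.filter fun e => G.head D e = v).card : ℤ)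

/-- `e` is incident with `v`. -/
def Incident (G : Multigraph V E) (v : V) (e : E) : Prop :=
  G.fst e = v ∨ G.snd e = v

instance (G : Multigraph V E) (v : V) : DecidablePred (G.Incident v) := fun e =>
  inferInstanceAs (Decidable (G.fst e = v ∨ G.snd e = v))

/-- The degree of a vertex. -/
def degree (G : Multigraph V E) (v : V) : ℕ :=
  (univ.filter fun e => G.Incident v e).card

/-- The edge-cut `∂_G(A)`: edges with exactly one endpoint in `A`. -/
def cut (G : Multigraph V E) (A : Finset V) : Finset E :=
  univ.filter fun e => ¬ ((G.fst e ∈ A) ↔ (G.snd e ∈ A))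

/-- `G` is `k`-edge-connected: every edge-cut has at least `k` edges. -/
def EdgeConnected (G : Multigraph V E) (k : ℕ) : Prop :=
  ∀ A : Finset V, A.Nonempty → A ≠ univ → k ≤ (G.cut A).card

/-- A boundary function: values in `ℤ₃` summing to `0`. -/
def IsBoundary (β : V → ZMod 3) : Prop := ∑ v, β v = 0

/-- `D` is a `β`-orientation: `d⁺(v) - d⁻(v) ≡ β v (mod 3)` at every vertex. -/
def IsBetaOrientation (G : Multigraph V E) (β : V → ZMod 3) (D : E → Bool) : Prop :=
  ∀ v : V, ((G.outDeg D v - G.inDeg D v : ℤ) : ZMod 3) = β v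

/-- A mod 3-orientation: `d⁺(v) ≡ d⁻(v) (mod 3)` at every vertex. -/
def IsMod3Orientation (G : Multigraph V E) (D : E → Bool) : Prop :=
  ∀ v : V, ((G.outDeg D v - G.inDeg D v : ℤ) : ZMod 3) = 0

/-- `G` admits a mod 3-orientation (equivalently, a nowhere-zero 3-flow). -/
def Mod3Orientable (G : Multigraph V E) : Prop := ∃ D, G.IsMod3Orientation D

/-- `G` is `ℤ₃`-connected. -/
def Z3Connected (G : Multigraph V E) : Prop :=
  ∀ β : V → ZMod 3, IsBoundary β → ∃ D, G.IsBetaOrientation β D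

/-- `G` is `ℤ₃`-extendable at `x`: every pre-orientation of the edges at `x`
compatible with `β x` extends to a `β`-orientation of `G`. -/
def Z3ExtendableAt (G : Multigraph V E) (x : V) : Prop :=
  ∀ β : V → ZMod 3, IsBoundary β →
    ∀ D₀ : E → Bool, ((G.outDeg D₀ x - G.inDeg D₀ x : ℤ) : ZMod 3) = β x →
      ∃ D : E → Bool, (∀ e, G.Incident x e → D e = D₀ e) ∧ G.IsBetaOrientation β D

/-- `G` is mod-3-extendable at `x`: every pre-orientation of `∂(x)` with
`d⁺(x) ≡ d⁻(x) (mod 3)` extends to a mod 3-orientation of `G`. -/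
def Mod3ExtendableAt (G : Multigraph V E) (x : V) : Prop :=
  ∀ D₀ : E → Bool, ((G.outDeg D₀ x - G.inDeg D₀ x : ℤ) : ZMod 3) = 0 →
    ∃ D : E → Bool, (∀ e, G.Incident x e → D e = D₀ e) ∧ G.IsMod3Orientation D

/-- `A` is a `k`-critical-set: `d(A) ≤ k` but every nonempty proper subset has
larger boundary. -/
def CriticalSet (G : Multigraph V E) (k : ℕ) (A : Finset V) : Prop :=
  A.Nonempty ∧ A ≠ univ ∧ (G.cut A).card ≤ k ∧
    ∀ B : Finset V, B.Nonempty → B ⊂ A → k < (G.cut B).card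

/-- The set of edge-cuts of size exactly `k` (as sets of edges). -/
def kCuts (G : Multigraph V E) (k : ℕ) : Finset (Finset E) :=
  ((univ : Finset (Finset V)).filter
    fun A => A.Nonempty ∧ A ≠ univ ∧ (G.cut A).card = k).image G.cut


/-- A drawing of `G` in the plane: an injective placement of the vertices and,
for each edge, an injective continuous arc joining the positions of its
endpoints, such that no vertex position lies in the interior of any arc. -/
structure Drawing {V E : Type} (G : Multigraph V E) where
  vpos : V → ℝ × ℝ
  arc : E → ℝ → ℝ × ℝ
  arc_continuous : ∀ e, ContinuousOn (arc e) (Set.Icc 0 1)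
  arc_injOn : ∀ e, Set.InjOn (arc e) (Set.Icc 0 1)
  arc_zero : ∀ e, arc e 0 = vpos (G.fst e)
  arc_one : ∀ e, arc e 1 = vpos (G.snd e)
  vpos_injective : Function.Injective vpos
  vertex_not_interior : ∀ e v, vpos v ∉ arc e '' Set.Ioo 0 1

/-- The crossing pairs of a drawing: ordered pairs of distinct edges whose open
arcs (interiors) intersect. -/
def Drawing.crossings {V E : Type} {G : Multigraph V E} (d : Drawing G) :
    Set (E × E) :=
  {p | p.1 ≠ p.2 ∧ (d.arc p.1 '' Set.Ioo 0 1 ∩ d.arc p.2 '' Set.Ioo 0 1).Nonempty}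

/-- `G` is planar: it has a drawing with no crossings. -/
def Planar {V E : Type} (G : Multigraph V E) : Prop :=
  ∃ d : Drawing G, d.crossings = ∅

/-- `G` has crossing number at most one: it has a drawing with at most one
crossing pair of edges. -/
def CrossingNumberLE1 {V E : Type} (G : Multigraph V E) : Prop :=
  ∃ d : Drawing G, ∀ p ∈ d.crossings, ∀ q ∈ d.crossings, p = q ∨ p = q.swap

end Multigraph

/-!
Let `e = x₁x₂` and `f = y₁y₂` cross, where `y₂` is not an end of `e`. Delete both edges and join a
new vertex `z` to `x₁`, `x₂`, `y₂`, `y₁`, `y₁`. No edge-cut drops below 5, since a set of old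
vertices gains at least as many new edges in its cut as it loses. Extending, in the new graph, the
orientation of all five edges away from `z` gives an orientation of the old graph, in which `e` and
`f` may be directed arbitrarily once the boundary is adjusted.

For planarity, place `z` at the last common point of the two arcs on the way to `y₂`, so that pieces
of these arcs lead to `x₁`, `x₂`, `y₂`. The rest of the arc of `f` leads to `y₁`, and although it
may cross the arc of `e` many times, it crosses only edges ending at `z`. One can therefore pull `z`
along it towards `y₁`, dragging these edges, until `y₁` is visible from a convex neighbourhood of
`z`, and then draw any number of parallel edges to `y₁`.

The same sliding argument redraws `f` alongside `e` if they are parallel, and in a drawing without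
crossings a point in the interior of any edge `ab`, joined once to `a` and four times to `b`, serves
as `z`.
-/

section Arc

variable {X Y : Type*} [TopologicalSpace X] [TopologicalSpace Y] {A B K : Set X} {a b c : X}

/-- `A` is a simple arc with ends `a` and `b`. Only the trace is recorded, so that cutting, joining
and moving arcs are operations on sets. -/
def IsArc (A : Set X) (a b : X) : Prop :=
  ∃ γ : Path a b, Function.Injective γ ∧ Set.range γ = A

lemma isArc_image_Icc {f : ℝ → X} (hf : ContinuousOn f (Set.Icc 0 1))
    (hinj : Set.InjOn f (Set.Icc 0 1)) : IsArc (f '' Set.Icc 0 1) (f 0) (f 1) :=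
  ⟨⟨⟨(Set.Icc 0 1).domRestrict f, hf.domRestrict⟩, rfl, rfl⟩, hinj.injective,
    Set.range_domRestrict f _⟩

namespace IsArc

lemma exists_eq_image_Icc (hA : IsArc A a b) : ∃ f : ℝ → X, ContinuousOn f (Set.Icc 0 1) ∧
    Set.InjOn f (Set.Icc 0 1) ∧ f 0 = a ∧ f 1 = b ∧ f '' Set.Icc 0 1 = A := by
  obtain ⟨γ, hγ, rfl⟩ := hA
  refine ⟨γ.extend, γ.continuous_extend.continuousOn, fun s hs t ht hst => ?_, γ.extend_zero,
    γ.extend_one, γ.image_extend_of_subset subset_rfl⟩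
  rw [γ.extend_apply hs, γ.extend_apply ht] at hst
  exact congrArg Subtype.val (hγ hst)

lemma symm (hA : IsArc A a b) : IsArc A b a := by
  obtain ⟨γ, hγ, rfl⟩ := hA
  exact ⟨γ.symm, hγ.comp unitInterval.symm_bijective.injective, γ.symm_range⟩

lemma left_mem (hA : IsArc A a b) : a ∈ A := by
  obtain ⟨γ, -, rfl⟩ := hA
  exact γ.source_mem_range

lemma right_mem (hA : IsArc A a b) : b ∈ A := hA.symm.left_mem

lemma ne (hA : IsArc A a b) : a ≠ b := by
  obtain ⟨γ, hγ, -⟩ := hA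
  simpa only [γ.source, γ.target] using hγ.ne (zero_ne_one (α := unitInterval))

lemma isCompact (hA : IsArc A a b) : IsCompact A := by
  obtain ⟨γ, -, rfl⟩ := hA
  exact isCompact_range γ.continuous

lemma isPreconnected (hA : IsArc A a b) : IsPreconnected A := by
  obtain ⟨γ, -, rfl⟩ := hA
  exact isPreconnected_range γ.continuous

lemma image (hA : IsArc A a b) (h : X ≃ₜ Y) : IsArc (h '' A) (h a) (h b) := by
  obtain ⟨γ, hγ, rfl⟩ := hA
  exact ⟨γ.map h.continuous, h.injective.comp hγ, Set.range_comp h γ⟩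

lemma trans (hA : IsArc A a b) (hB : IsArc B b c) (hAB : A ∩ B ⊆ {b}) : IsArc (A ∪ B) a c := by
  obtain ⟨γ, hγ, rfl⟩ := hA
  obtain ⟨δ, hδ, rfl⟩ := hB
  refine ⟨γ.trans δ, fun s t hst => ?_, γ.trans_range δ⟩
  have meet (u v : unitInterval) (huv : γ u = δ v) : (u : ℝ) = 1 ∧ (v : ℝ) = 0 := by
    have hb : γ u = b := hAB ⟨⟨u, rfl⟩, ⟨v, huv.symm⟩⟩
    exact ⟨congrArg Subtype.val (hγ (hb.trans γ.target.symm)),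
      congrArg Subtype.val (hδ ((huv.symm.trans hb).trans δ.source.symm))⟩
  simp only [Path.trans_apply] at hst
  split_ifs at hst with hs ht ht
  · have := congrArg Subtype.val (hγ hst)
    exact Subtype.ext (by simpa using this)
  · have := meet _ _ hst
    exact absurd this.2 (by dsimp only; linarith)
  · have := meet _ _ hst.symm
    exact absurd this.2 (by dsimp only; linarith)
  · have := congrArg Subtype.val (hδ hst)
    exact Subtype.ext (by simpa using this)

lemma image_Icc {γ : Path a b} (hγ : Function.Injective γ) {s t : unitInterval} (hst : s < t) :
    IsArc (γ '' Set.Icc s t) (γ s) (γ t) := by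
  refine ⟨γ.subpath s t, hγ.comp fun u v huv => ?_, γ.range_subpath_of_le s t hst.le⟩
  have huv : (1 - (u : ℝ)) * s + u * t = (1 - (v : ℝ)) * s + v * t := congrArg Subtype.val huv
  have hst : (s : ℝ) < t := hst
  exact Subtype.ext (mul_right_cancel₀ (sub_pos.2 hst).ne' (by linarith))

lemma exists_split (hA : IsArc A a b) (hc : c ∈ A) (hca : c ≠ a) (hcb : c ≠ b) :
    ∃ B C, IsArc B a c ∧ IsArc C c b ∧ B ∪ C = A ∧ B ∩ C = {c} := by
  obtain ⟨γ, hγ, rfl⟩ := hA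
  obtain ⟨t, rfl⟩ := hc
  have ht₀ : 0 < t := unitInterval.pos_iff_ne_zero.2 fun h => hca (by rw [h, γ.source])
  have ht₁ : t < 1 := unitInterval.lt_one_iff_ne_one.2 fun h => hcb (by rw [h, γ.target])
  refine ⟨γ '' Set.Icc 0 t, γ '' Set.Icc t 1, ?_, ?_, ?_, ?_⟩
  · simpa only [γ.source] using image_Icc hγ ht₀
  · simpa only [γ.target] using image_Icc hγ ht₁
  · rw [← Set.image_union, Set.Icc_union_Icc_eq_Icc ht₀.le ht₁.le, ← Set.image_univ]
    exact congrArg _ (Set.eq_univ_of_forall fun s => ⟨s.2.1, s.2.2⟩)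
  · rw [← Set.image_inter hγ, Set.Icc_inter_Icc_eq_singleton ht₀.le ht₁.le, Set.image_singleton]

lemma exists_mem_ne_ne (hA : IsArc A a b) : ∃ c ∈ A, c ≠ a ∧ c ≠ b := by
  obtain ⟨γ, hγ, rfl⟩ := hA
  obtain ⟨t, ht₀, ht₁⟩ := exists_between (zero_lt_one (α := unitInterval))
  exact ⟨γ t, ⟨t, rfl⟩, fun h => ht₀.ne' (hγ (h.trans γ.source.symm)),
    fun h => ht₁.ne (hγ (h.trans γ.target.symm))⟩

lemma exists_last_exit (hA : IsArc A a b) (hK : IsClosed K) (ha : a ∈ K) (hb : b ∉ K) :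
    ∃ c ∈ A, ∃ B ⊆ A, IsArc B c b ∧ B ∩ K = {c} := by
  obtain ⟨γ, hγ, rfl⟩ := hA
  have hcompact : IsCompact (γ ⁻¹' K) := (hK.preimage γ.continuous).isCompact
  obtain ⟨t, htK, htmax⟩ := hcompact.exists_isGreatest ⟨0, by simpa using ha⟩
  have ht₁ : t < 1 := unitInterval.lt_one_iff_ne_one.2 fun h =>
    hb (by simpa only [h, Set.mem_preimage, γ.target] using htK)
  refine ⟨γ t, ⟨t, rfl⟩, γ '' Set.Icc t 1, Set.image_subset_range _ _, ?_, ?_⟩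
  · simpa only [γ.target] using image_Icc hγ ht₁
  · ext z
    constructor
    · rintro ⟨⟨s, hs, rfl⟩, hsK⟩
      exact congrArg γ ((htmax hsK).antisymm hs.1)
    · rintro rfl
      exact ⟨⟨t, ⟨le_rfl, ht₁.le⟩, rfl⟩, htK⟩

lemma notMem_interior_of_inter_eq_singleton (hA : IsArc A a b) (hAK : A ∩ K = {a}) (hK : IsClosed K)
    (hb : b ∉ K) : a ∉ interior K := by
  intro ha
  have hcover : A ⊆ interior K ∪ Kᶜ := fun z hz => by
    by_cases hzK : z ∈ K
    · obtain rfl : z = a := hAK.subset ⟨hz, hzK⟩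
      exact Or.inl ha
    · exact Or.inr hzK
  obtain ⟨z, -, hz, hzK⟩ := hA.isPreconnected _ _ isOpen_interior hK.isOpen_compl hcover
    ⟨a, hA.left_mem, ha⟩ ⟨b, hA.right_mem, hb⟩
  exact hzK (interior_subset hz)

end IsArc

end Arc

section Slide

variable {X : Type*} [NormedAddCommGroup X] [NormedSpace ℝ X] [CompleteSpace X] {U N : Set X}
  {a b w : X} {r : ℝ}

lemma exists_homeomorph_apply_eq_of_mem_ball (hb : b ∈ Metric.ball w r) :
    ∃ h : X ≃ₜ X, (∀ z ∉ Metric.ball w r, h z = z) ∧ h w = b := by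
  have hr : 0 < r := dist_nonneg.trans_lt hb
  let v : X := r⁻¹ • (b - w)
  have hv : ‖v‖ < 1 := by
    rw [norm_smul, norm_inv, Real.norm_of_nonneg hr.le, ← dist_eq_norm, inv_mul_lt_one₀ hr]
    exact hb
  let f : X → X := fun z => z + max 0 (r - dist z w) • v
  have hf : ApproximatesLinearOn f (ContinuousLinearEquiv.refl ℝ X : X →L[ℝ] X) Set.univ ‖v‖₊ := by
    intro x _ y _
    have hlip : |max 0 (r - dist x w) - max 0 (r - dist y w)| ≤ ‖x - y‖ :=
      calc _ ≤ |(r - dist x w) - (r - dist y w)| := by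
            simpa using abs_max_sub_max_le_max 0 (r - dist x w) 0 (r - dist y w)
        _ = |dist x w - dist y w| := by rw [sub_sub_sub_cancel_left, abs_sub_comm]
        _ ≤ ‖x - y‖ := (abs_dist_sub_le x y w).trans_eq (dist_eq_norm x y)
    calc ‖f x - f y - (x - y)‖ = ‖(max 0 (r - dist x w) - max 0 (r - dist y w)) • v‖ := by
          simp only [f, sub_smul]; congr 1; abel
      _ ≤ ‖v‖₊ * ‖x - y‖ := by
          rw [norm_smul, mul_comm, coe_nnnorm, Real.norm_eq_abs]; gcongr
  have hc : Subsingleton X ∨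
      ‖v‖₊ < ‖((ContinuousLinearEquiv.refl ℝ X).symm : X →L[ℝ] X)‖₊⁻¹ := by
    rcases subsingleton_or_nontrivial X with hX | hX
    · exact Or.inl hX
    · have hid : ‖((ContinuousLinearEquiv.refl ℝ X).symm : X →L[ℝ] X)‖₊ = 1 :=
        ContinuousLinearMap.nnnorm_id
      exact Or.inr (by rwa [hid, inv_one])
  refine ⟨hf.toHomeomorph f hc, fun z hz => ?_, ?_⟩
  · have hz : r - dist z w ≤ 0 := by simpa using hz
    change z + max 0 (r - dist z w) • v = z
    rw [max_eq_left hz, zero_smul, add_zero]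
  · change w + max 0 (r - dist w w) • v = b
    rw [dist_self, sub_zero, max_eq_right hr.le, smul_inv_smul₀ hr.ne', add_sub_cancel]

lemma exists_homeomorph_apply_eq_of_isPreconnected (hN : IsPreconnected N) (hU : IsOpen U)
    (hNU : N ⊆ U) (ha : a ∈ N) (hb : b ∈ N) :
    ∃ h : X ≃ₜ X, (∀ z ∉ U, h z = z) ∧ h a = b := by
  refine hN.induction₂ (fun a b => ∃ h : X ≃ₜ X, (∀ z ∉ U, h z = z) ∧ h a = b)
    (fun w hw => ?_) ?_ ?_ ha hb
  · obtain ⟨r, hr, hrU⟩ := Metric.isOpen_iff.1 hU w (hNU hw)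
    filter_upwards [mem_nhdsWithin_of_mem_nhds (Metric.ball_mem_nhds w hr)] with b hb
    obtain ⟨h, hfix, hw⟩ := exists_homeomorph_apply_eq_of_mem_ball hb
    exact ⟨h, fun z hz => hfix z (mt (@hrU z) hz), hw⟩
  · rintro x y z - - - ⟨h, hh, rfl⟩ ⟨k, hk, rfl⟩
    exact ⟨h.trans k, fun z hz => (congrArg k (hh z hz)).trans (hk z hz), rfl⟩
  · rintro x y - - ⟨h, hh, rfl⟩
    exact ⟨h.symm, fun z hz => h.symm_apply_eq.2 (hh z hz).symm, h.symm_apply_apply x⟩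

end Slide

section Convex

variable {X : Type*} [NormedAddCommGroup X] [NormedSpace ℝ X] {A K : Set X} {a b c c' p z : X}

lemma isArc_segment (hab : a ≠ b) : IsArc (segment ℝ a b) a b := by
  rw [segment_eq_image_lineMap]
  simpa using isArc_image_Icc (f := AffineMap.lineMap a b)
    AffineMap.lineMap_continuous.continuousOn (AffineMap.lineMap_injective ℝ hab).injOn

lemma eq_of_mem_segment_of_notMem_interior (hK : Convex ℝ K) (hp : p ∈ interior K)
    (hc : c ∈ K) (hz : z ∈ segment ℝ p c) (hzK : z ∉ interior K) : z = c := by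
  rw [← insert_endpoints_openSegment] at hz
  rcases hz with rfl | rfl | hz
  · exact absurd hp hzK
  · rfl
  · exact absurd (hK.openSegment_interior_self_subset_interior hp hc hz) hzK

lemma mem_segment_or_mem_segment (hz : z ∈ segment ℝ p c) (hz' : z ∈ segment ℝ p c')
    (hzp : z ≠ p) : c ∈ segment ℝ p c' ∨ c' ∈ segment ℝ p c := by
  rw [mem_segment_iff_wbtw] at hz hz'
  have hsame : SameRay ℝ (c -ᵥ p) (c' -ᵥ p) :=
    hz.sameRay_vsub_left.symm.trans hz'.sameRay_vsub_left fun h => absurd (sub_eq_zero.1 h) hzp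
  simpa only [mem_segment_iff_wbtw] using wbtw_total_of_sameRay_vsub_left hsame

lemma segment_inter_segment_subset (hK : Convex ℝ K) (hp : p ∈ interior K) (hc : c ∈ K)
    (hcK : c ∉ interior K) (hc' : c' ∈ K) (hcK' : c' ∉ interior K) (hcc' : c ≠ c') :
    segment ℝ p c ∩ segment ℝ p c' ⊆ {p} := by
  rintro z ⟨hz, hz'⟩
  by_contra hzp
  rcases mem_segment_or_mem_segment hz hz' hzp with h | h
  · exact hcc' (eq_of_mem_segment_of_notMem_interior hK hp hc' h hcK)
  · exact hcc' (eq_of_mem_segment_of_notMem_interior hK hp hc h hcK').symm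

lemma IsArc.exists_straighten (hA : IsArc A a b) (hK : Convex ℝ K) (hKc : IsClosed K)
    (ha : a ∈ interior K) (hb : b ∉ K) :
    ∃ c ∈ A, c ∈ frontier K ∧
      ∃ B, IsArc B a b ∧ B ∩ K = segment ℝ a c ∧ B \ interior K ⊆ A := by
  obtain ⟨c, hcA, B, hBA, hB, hBK⟩ := hA.exists_last_exit hKc (interior_subset ha) hb
  have hcK : c ∈ K := (hBK.symm.subset rfl).2
  have hcint := hB.notMem_interior_of_inter_eq_singleton hBK hKc hb
  have hsub : segment ℝ a c ⊆ K := hK.segment_subset (interior_subset ha) hcK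
  refine ⟨c, hcA, ⟨subset_closure hcK, hcint⟩, segment ℝ a c ∪ B,
    (isArc_segment (ne_of_mem_of_not_mem ha hcint)).trans hB
      fun z hz => hBK.subset ⟨hz.2, hsub hz.1⟩, ?_, ?_⟩
  · rw [Set.union_inter_distrib_right, hBK, Set.inter_eq_left.2 hsub,
      Set.union_eq_left.2 (Set.singleton_subset_iff.2 (right_mem_segment ℝ a c))]
  · rintro z ⟨hz | hz, hzK⟩
    · exact eq_of_mem_segment_of_notMem_interior hK ha hcK hz hzK ▸ hcA
    · exact hBA hz

lemma isCompact_convexJoin_singleton (hK : IsCompact K) (a : X) :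
    IsCompact (convexJoin ℝ {a} K) := by
  have himage : convexJoin ℝ {a} K =
      (fun q : X × ℝ => AffineMap.lineMap a q.1 q.2) '' K ×ˢ Set.Icc (0 : ℝ) 1 := by
    ext z
    simp only [convexJoin_singleton_left, segment_eq_image_lineMap, Set.mem_iUnion, Set.mem_image,
      Set.mem_prod, Prod.exists]
    tauto
  exact himage ▸ (hK.prod isCompact_Icc).image (by fun_prop)

lemma notMem_interior_convexJoin_singleton (hK : Convex ℝ K) (hne : K.Nonempty)
    (ha : a ∉ K) : a ∉ interior (convexJoin ℝ {a} K) := by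
  intro hint
  obtain ⟨w, hw⟩ := hne
  have hcont : Filter.Tendsto (fun s : ℝ => a + s • (a - w)) (nhdsWithin 0 (Set.Ioi 0)) (nhds a) :=
    (Continuous.tendsto' (by fun_prop) _ _ (by simp)).mono_left nhdsWithin_le_nhds
  obtain ⟨s, hs, hs₀⟩ := ((hcont.eventually_mem (mem_interior_iff_mem_nhds.1 hint)).and
    self_mem_nhdsWithin).exists
  obtain ⟨b, hb, hsb⟩ : ∃ b ∈ K, a + s • (a - w) ∈ segment ℝ a b := by
    simpa [convexJoin_singleton_left] using hs
  have hray : SameRay ℝ (s • (a - w)) (b - a) := by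
    simpa using (mem_segment_iff_wbtw.1 hsb).sameRay_vsub_left
  have hray : SameRay ℝ (a - w) (b - a) :=
    (SameRay.sameRay_pos_smul_right _ hs₀).trans hray fun h =>
      Or.inl ((smul_eq_zero.1 h).resolve_left (ne_of_gt hs₀))
  exact ha (hK.segment_subset hw hb (mem_segment_iff_sameRay.2 hray))

lemma IsArc.exists_homeomorph_apply_mem_interior [CompleteSpace X] {R : Set X} (hA : IsArc A a b)
    (hK : Convex ℝ K) (hKc : IsClosed K) (hb : b ∈ interior K) (ha : a ∉ K) (hR : IsClosed R)
    (hAR : Disjoint (A \ interior K) R) :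
    ∃ h : X ≃ₜ X, (∀ z ∈ R, h z = z) ∧ h a ∈ interior K \ R := by
  obtain ⟨c, -, B, hBA, hB, hBK⟩ := hA.symm.exists_last_exit hKc (interior_subset hb) ha
  have hBint : Disjoint B (interior K) := Set.disjoint_left.2 fun z hz hzK =>
    hB.notMem_interior_of_inter_eq_singleton hBK hKc ha
      (hBK.subset ⟨hz, interior_subset hzK⟩ ▸ hzK)
  have hBR : B ⊆ Rᶜ := fun z hz => Set.disjoint_left.1 hAR ⟨hBA hz, Set.disjoint_left.1 hBint hz⟩
  obtain ⟨r, hr, hrR⟩ := Metric.isOpen_iff.1 hR.isOpen_compl c (hBR hB.left_mem)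
  have hcK : c ∈ closure (interior K) := by
    rw [hK.closure_interior_eq_closure_of_nonempty_interior ⟨b, hb⟩]
    exact subset_closure (hBK.symm.subset rfl).2
  obtain ⟨w, hwK, hw⟩ := Metric.mem_closure_iff.1 hcK r hr
  have hN : IsPreconnected (B ∪ Metric.ball c r) :=
    hB.isPreconnected.union c hB.left_mem (Metric.mem_ball_self hr)
      (convex_ball c r).isPreconnected
  have hw : w ∈ Metric.ball c r := Metric.mem_ball'.2 hw
  obtain ⟨h, hfix, rfl⟩ := exists_homeomorph_apply_eq_of_isPreconnected hN hR.isOpen_compl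
    (Set.union_subset hBR hrR) (Or.inl hB.right_mem) (Or.inr hw)
  exact ⟨h, fun z hz => hfix z (not_not.2 hz), hwK, hrR hw⟩

/-- A parabolic arc from `w` to `y`, leaning towards `w + v`. Varying `v` along a line gives arcs
that meet only at their ends. -/
def bentArc (w y v : X) : Set X :=
  (fun t : ℝ => w + t • (y - w + (1 - t) • v)) '' Set.Icc 0 1

variable {ι : Type*} {v w y : X} {T : Set X} {s s' : ℝ}

lemma isArc_bentArc (hv : LinearIndependent ℝ ![y - w, v]) : IsArc (bentArc w y v) w y := by
  have hinj : Function.Injective fun t : ℝ => w + t • (y - w + (1 - t) • v) := fun t t' h => by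
    simp only [add_right_inj, smul_add, smul_smul] at h
    exact (hv.eq_of_pair h).1
  simpa [bentArc] using isArc_image_Icc (Continuous.continuousOn (by fun_prop)) hinj.injOn

lemma bentArc_subset (hK : Convex ℝ K) (hw : w ∈ K) (hv : w + v ∈ K) (hy : y ∈ K) :
    bentArc w y v ⊆ K := by
  rintro _ ⟨t, ⟨ht₀, ht₁⟩, rfl⟩
  have hcomb : w + t • (y - w + (1 - t) • v) =
      (1 - t) • ((1 - t) • w + t • (w + v)) + t • y := by module
  have hwv := hK hw hv (sub_nonneg.2 ht₁) ht₀ (sub_add_cancel 1 t)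
  simpa only [hcomb] using hK hwv hy (sub_nonneg.2 ht₁) ht₀ (sub_add_cancel 1 t)

lemma bentArc_smul_inter_subset (hv : LinearIndependent ℝ ![y - w, v]) (hs : s ≠ s') :
    bentArc w y (s • v) ∩ bentArc w y (s' • v) ⊆ {w, y} := by
  rintro _ ⟨⟨t, -, rfl⟩, t', -, htt'⟩
  simp only [add_right_inj, smul_add, smul_smul] at htt'
  obtain ⟨rfl, h⟩ := hv.eq_of_pair htt'
  have h : t' * ((1 - t') * (s - s')) = 0 := by linear_combination -h
  rcases mul_eq_zero.1 h with rfl | h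
  · simp
  · obtain rfl : 1 = t' := sub_eq_zero.1 ((mul_eq_zero_iff_right (sub_ne_zero.2 hs)).1 h)
    simp

lemma eventually_bentArc_inter_segment_subset (hK : Convex ℝ K) (hw : w ∈ interior K)
    (hy : y ∈ K) (hyK : y ∉ interior K) (hc : c ∈ K) (hcK : c ∉ interior K) (hcy : c ≠ y)
    (hv : LinearIndependent ℝ ![y - w, v]) :
    ∀ᶠ s in nhdsWithin (0 : ℝ) (Set.Ioi 0), bentArc w y (s • v) ∩ segment ℝ w c ⊆ {w} := by
  obtain ⟨δ, hδ, hmin⟩ : ∃ δ > 0, ∀ l σ : ℝ, l ≠ 0 → 0 < σ →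
      c - w = l • (y - w + σ • v) → δ ≤ σ := by
    by_cases h : ∃ l σ : ℝ, l ≠ 0 ∧ 0 < σ ∧ c - w = l • (y - w + σ • v)
    · obtain ⟨l, δ, -, hδ, hc⟩ := h
      refine ⟨δ, hδ, fun l' σ hl' _ hc' => ?_⟩
      rw [hc, smul_add, smul_add, smul_smul, smul_smul] at hc'
      obtain ⟨rfl, h⟩ := hv.eq_of_pair hc'
      exact (mul_left_cancel₀ hl' h).le
    · exact ⟨1, one_pos, fun l σ hl hσ hc => absurd ⟨l, σ, hl, hσ, hc⟩ h⟩
  filter_upwards [Ioo_mem_nhdsGT hδ]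
  rintro s ⟨hs₀, hs⟩ _ ⟨⟨t, ⟨ht₀, ht₁⟩, rfl⟩, hz⟩
  by_contra hne
  have ht : t ≠ 0 := by rintro rfl; simp at hne
  have ht₁ : t ≠ 1 := by
    rintro rfl
    exact hne (segment_inter_segment_subset hK hw hc hcK hy hyK hcy
      ⟨hz, by simpa using right_mem_segment ℝ w y⟩)
  rw [segment_eq_image'] at hz
  obtain ⟨u, -, hu⟩ := hz
  simp only [add_right_inj] at hu
  have hu₀ : u ≠ 0 := by
    rintro rfl
    rw [zero_smul] at hu
    simp [← hu] at hne
  have h1t : 0 < 1 - t := sub_pos.2 (lt_of_le_of_ne ‹_› ht₁)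
  have hray : c - w = (u⁻¹ * t) • (y - w + ((1 - t) * s) • v) := by
    rw [mul_smul, mul_smul, ← hu, inv_smul_smul₀ hu₀]
  have hδs := hmin _ _ (mul_ne_zero (inv_ne_zero hu₀) ht) (mul_pos h1t hs₀) hray
  linarith [mul_nonneg ht₀ hs₀.le]

lemma exists_pairwise_isArc_of_convex [Countable ι] (hX : 1 < Module.rank ℝ X) (hK : Convex ℝ K)
    (hw : w ∈ interior K) (hy : y ∈ K) (hyK : y ∉ interior K) (hT : T.Finite)
    (hTK : T ⊆ K \ interior K) (hyT : y ∉ T) :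
    ∃ Q : ι → Set X, (∀ i, IsArc (Q i) w y) ∧ (∀ i, Q i ⊆ K) ∧
      (Pairwise fun i j => Q i ∩ Q j ⊆ {w, y}) ∧ ∀ i, ∀ c ∈ T, Q i ∩ segment ℝ w c ⊆ {w} := by
  have hwy : y - w ≠ 0 := sub_ne_zero.2 (ne_of_mem_of_not_mem hw hyK).symm
  obtain ⟨v, hv⟩ := exists_linearIndependent_pair_of_one_lt_rank hX hwy
  have hin : ∀ᶠ s in nhdsWithin (0 : ℝ) (Set.Ioi 0), w + s • v ∈ K := by
    have hcont : Filter.Tendsto (fun s : ℝ => w + s • v) (nhds 0) (nhds w) :=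
      Continuous.tendsto' (by fun_prop) _ _ (by simp)
    exact (hcont.eventually_mem (mem_interior_iff_mem_nhds.1 hw)).filter_mono nhdsWithin_le_nhds
  have hoff := (Filter.eventually_all_finite hT).2 fun c hc =>
    eventually_bentArc_inter_segment_subset hK hw hy hyK (hTK hc).1 (hTK hc).2
      (ne_of_mem_of_not_mem hc hyT) hv
  obtain ⟨δ, hδ, hsub⟩ := mem_nhdsGT_iff_exists_Ioo_subset.1 (hin.and hoff)
  have hδ : 0 < δ := hδ
  obtain ⟨n, hn⟩ := exists_injective_nat ι
  let s (i : ι) : ℝ := δ / (n i + 2)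
  have hs (i) : s i ∈ Set.Ioo 0 δ := ⟨by positivity, div_lt_self hδ (by linarith)⟩
  have hs_inj : Function.Injective s := fun i j hij => hn <| by
    simpa [s, div_eq_mul_inv, hδ.ne'] using hij
  refine ⟨fun i => bentArc w y (s i • v), fun i => isArc_bentArc ?_, fun i => ?_,
    fun i j hij => bentArc_smul_inter_subset hv (hs_inj.ne hij), fun i => (hsub (hs i)).2⟩
  · simpa using (LinearIndependent.pair_smul_smul_iff isUnit_one (hs i).1.ne'.isUnit).2 hv
  · exact bentArc_subset hK (interior_subset hw) (hsub (hs i)).1 hy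

end Convex

/-- A drawing, in a topological space `X`, of the multigraph with vertex type `W` and edge type `F`
in which the edge `e` joins the two points of `ends e`. The arcs are recorded as sets; they may
cross each other, but `mem_ends` forbids them to pass through a vertex. -/
structure ArcDrawing {F W : Type*} (ends : F → Sym2 W) (X : Type*) [TopologicalSpace X] where
  pos : W → X
  arc : F → Set X
  pos_injective : Function.Injective pos
  isArc {e a b} : ends e = s(a, b) → IsArc (arc e) (pos a) (pos b)
  mem_ends {e v} : pos v ∈ arc e → v ∈ ends e

namespace ArcDrawing

variable {F W X : Type*}

section TopologicalSpace

variable [TopologicalSpace X] {ends : F → Sym2 W} (d : ArcDrawing ends X)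

/-- Distinct arcs meet only in vertices. -/
def IsCrossingFree : Prop :=
  Pairwise fun e e' => d.arc e ∩ d.arc e' ⊆ Set.range d.pos

lemma isCompact_arc (e : F) : IsCompact (d.arc e) := by
  induction h : ends e with
  | h a b => exact (d.isArc h).isCompact

/-- The image of a drawing under a homeomorphism. -/
def map (h : X ≃ₜ X) : ArcDrawing ends X where
  pos := h ∘ d.pos
  arc e := h '' d.arc e
  pos_injective := h.injective.comp d.pos_injective
  isArc he := (d.isArc he).image h
  mem_ends hv := d.mem_ends (h.injective.mem_set_image.1 hv)

lemma IsCrossingFree.map {d : ArcDrawing ends X} (hd : d.IsCrossingFree) (h : X ≃ₜ X) :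
    (d.map h).IsCrossingFree := by
  intro e e' hee'
  simp only [ArcDrawing.map, ← Set.image_inter h.injective, Set.range_comp]
  exact Set.image_mono (hd hee')

/-- The part of a drawing that avoids the vertex `v`: all other vertices, and the arcs of the edges
that do not end at `v`. -/
def antistar (v : W) : Set X :=
  d.pos '' {v}ᶜ ∪ ⋃ e ∈ {e | v ∉ ends e}, d.arc e

lemma pos_mem_antistar {v w : W} (h : w ≠ v) : d.pos w ∈ d.antistar v :=
  Or.inl ⟨w, h, rfl⟩

lemma arc_subset_antistar {v : W} {e : F} (h : v ∉ ends e) : d.arc e ⊆ d.antistar v :=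
  (Set.subset_biUnion_of_mem (u := d.arc) h).trans Set.subset_union_right

lemma pos_notMem_antistar (v : W) : d.pos v ∉ d.antistar v := by
  simp only [antistar, Set.mem_union, Set.mem_iUnion₂, not_or, not_exists,
    d.pos_injective.mem_set_image]
  exact ⟨fun h => h rfl, fun e hve hv => hve (d.mem_ends hv)⟩

lemma antistar_map (h : X ≃ₜ X) (v : W) : (d.map h).antistar v = h '' d.antistar v := by
  simp only [antistar, map, Set.image_union, Set.image_iUnion, Set.image_comp]

lemma isClosed_antistar [T2Space X] [Finite F] [Finite W] (v : W) : IsClosed (d.antistar v) :=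
  (Set.toFinite _).isClosed.union <|
    (Set.toFinite _).isClosed_biUnion fun e _ => (d.isCompact_arc e).isClosed

end TopologicalSpace

section Straighten

variable [NormedAddCommGroup X] [NormedSpace ℝ X] {ends : F → Sym2 W} {d : ArcDrawing ends X}
  {p : W} {K : Set X}

lemma exists_straighten_arc (hK : Convex ℝ K) (hKc : IsClosed K) (hp : d.pos p ∈ interior K)
    (hnbr : ∀ e q, ends e = s(p, q) → d.pos q ∉ K) (e : F) :
    ∃ B, (p ∉ ends e → B = d.arc e) ∧ (∀ {a b}, ends e = s(a, b) → IsArc B (d.pos a) (d.pos b)) ∧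
      (p ∈ ends e → ∃ c ∈ frontier K, c ∈ d.arc e ∧ c ∉ Set.range d.pos ∧
        B ∩ K = segment ℝ (d.pos p) c) ∧ B \ interior K ⊆ d.arc e := by
  by_cases hpe : p ∈ ends e
  · obtain ⟨q, hq⟩ := Sym2.mem_iff_exists.1 hpe
    have hqK := hnbr e q hq
    obtain ⟨c, hcA, hc, B, hB, hBK, hBA⟩ := (d.isArc hq).exists_straighten hK hKc hp hqK
    refine ⟨B, fun h => absurd hpe h, fun {a b} hab => ?_, fun _ => ⟨c, hc, hcA, ?_, hBK⟩, hBA⟩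
    · rcases Sym2.eq_iff.1 (hq.symm.trans hab) with ⟨rfl, rfl⟩ | ⟨rfl, rfl⟩
      exacts [hB, hB.symm]
    · rintro ⟨v, rfl⟩
      have hv := d.mem_ends hcA
      rw [hq, Sym2.mem_iff] at hv
      rcases hv with rfl | rfl
      exacts [hc.2 hp, hqK (hKc.frontier_subset hc)]
  · exact ⟨d.arc e, fun _ => rfl, d.isArc, fun h => absurd h hpe, Set.sdiff_subset⟩

lemma IsCrossingFree.exists_straighten (hd : d.IsCrossingFree) (hK : Convex ℝ K) (hKc : IsClosed K)
    (hp : d.pos p ∈ interior K) (hout : ∀ v ≠ p, d.pos v ∉ interior K)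
    (hnbr : ∀ e q, ends e = s(p, q) → d.pos q ∉ K)
    (hfar : ∀ e, p ∉ ends e → d.arc e ∩ K ⊆ Set.range d.pos) :
    ∃ d' : ArcDrawing ends X, d'.IsCrossingFree ∧ d'.pos = d.pos ∧
      (∀ e, p ∉ ends e → d'.arc e = d.arc e) ∧
      (∀ e, p ∈ ends e → ∃ c ∈ frontier K, c ∈ d.arc e ∧ c ∉ Set.range d.pos ∧
        d'.arc e ∩ K = segment ℝ (d.pos p) c) ∧
      ∀ e, d'.arc e \ interior K ⊆ d.arc e := by
  choose B hBfar hB hBnear hBK using exists_straighten_arc hK hKc hp hnbr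
  have mem_ends {e v} (hv : d.pos v ∈ B e) : v ∈ ends e := by
    by_cases hpe : p ∈ ends e
    · by_cases hvK : d.pos v ∈ K
      · obtain ⟨c, hc, hcA, -, hcB⟩ := hBnear e hpe
        by_contra hve
        have hvp : v ≠ p := fun h => hve (h ▸ hpe)
        have hvc := eq_of_mem_segment_of_notMem_interior hK hp (hKc.frontier_subset hc)
          (hcB.subset ⟨hv, hvK⟩) (hout v hvp)
        exact hve (d.mem_ends (hvc ▸ hcA))
      · exact d.mem_ends (hBK e ⟨hv, mt (@interior_subset _ _ K _) hvK⟩)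
    · exact d.mem_ends (hBfar e hpe ▸ hv)
  have meet {e e'} (hee' : e ≠ e') (hpe : p ∈ ends e) : B e ∩ B e' ∩ K ⊆ Set.range d.pos := by
    rintro z ⟨⟨hz, hz'⟩, hzK⟩
    obtain ⟨c, hc, hcA, hcpos, hcB⟩ := hBnear e hpe
    have hzc := hcB.subset ⟨hz, hzK⟩
    by_cases hpe' : p ∈ ends e'
    · obtain ⟨c', hc', hcA', -, hcB'⟩ := hBnear e' hpe'
      have hcc' : c ≠ c' := fun h => hcpos (hd hee' ⟨hcA, h ▸ hcA'⟩)
      exact ⟨p, (segment_inter_segment_subset hK hp (hKc.frontier_subset hc) hc.2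
        (hKc.frontier_subset hc') hc'.2 hcc' ⟨hzc, hcB'.subset ⟨hz', hzK⟩⟩).symm⟩
    · exact hfar e' hpe' ⟨hBfar e' hpe' ▸ hz', hzK⟩
  refine ⟨⟨d.pos, B, d.pos_injective, hB _, mem_ends⟩, fun e e' hee' z hz => ?_, rfl, hBfar,
    hBnear, hBK⟩
  by_cases hzK : z ∈ K
  · by_cases hpe : p ∈ ends e
    · exact meet hee' hpe ⟨hz, hzK⟩
    · exact hfar e hpe ⟨hBfar e hpe ▸ hz.1, hzK⟩
  · have hzK : z ∉ interior K := fun h => hzK (interior_subset h)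
    exact hd hee' ⟨hBK e ⟨hz.1, hzK⟩, hBK e' ⟨hz.2, hzK⟩⟩

end Straighten

section Extend

variable [TopologicalSpace X] {ends : F → Sym2 W} {P : F → Prop}

open scoped Classical in
/-- The drawing obtained by adding an arc `Q e` for each edge `e` satisfying `P` to a drawing of the
remaining edges. -/
noncomputable def extend (d : ArcDrawing (fun e : {e // ¬P e} => ends e) X)
    (Q : {e // P e} → Set X)
    (hQ : ∀ {e : {e // P e}} {a b}, ends e = s(a, b) → IsArc (Q e) (d.pos a) (d.pos b))
    (mem_ends : ∀ {e : {e // P e}} {v}, d.pos v ∈ Q e → v ∈ ends e) : ArcDrawing ends X where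
  pos := d.pos
  arc e := if he : P e then Q ⟨e, he⟩ else d.arc ⟨e, he⟩
  pos_injective := d.pos_injective
  isArc {e a b} hab := by
    split_ifs with he
    exacts [hQ hab, d.isArc hab]
  mem_ends {e v} hv := by
    split_ifs at hv
    exacts [mem_ends hv, d.mem_ends hv]

lemma IsCrossingFree.extend {d : ArcDrawing (fun e : {e // ¬P e} => ends e) X}
    {Q : {e // P e} → Set X}
    {hQ : ∀ {e : {e // P e}} {a b}, ends e = s(a, b) → IsArc (Q e) (d.pos a) (d.pos b)}
    {mem_ends : ∀ {e : {e // P e}} {v}, d.pos v ∈ Q e → v ∈ ends e} (hd : d.IsCrossingFree)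
    (hQQ : Pairwise fun e e' => Q e ∩ Q e' ⊆ Set.range d.pos)
    (hQd : ∀ e e', Q e ∩ d.arc e' ⊆ Set.range d.pos) :
    (d.extend Q hQ mem_ends).IsCrossingFree := by
  intro e e' hee'
  simp only [ArcDrawing.extend]
  split_ifs with he he' he'
  · exact hQQ (Subtype.coe_injective.ne_iff.1 hee')
  · exact hQd _ _
  · exact Set.inter_comm _ _ ▸ hQd _ _
  · exact hd (Subtype.coe_injective.ne_iff.1 hee')

end Extend

section InsertParallel

variable [NormedAddCommGroup X] [NormedSpace ℝ X] {ends : F → Sym2 W} {p y : W} {K : Set X}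
  {d : ArcDrawing (fun e : {e // ends e ≠ s(p, y)} => ends e) X}

lemma IsCrossingFree.exists_insert_of_convex [Finite F] (hX : 1 < Module.rank ℝ X)
    (hd : d.IsCrossingFree) (hK : Convex ℝ K) (hKc : IsClosed K) (hp : d.pos p ∈ interior K)
    (hy : d.pos y ∈ K) (hyK : d.pos y ∉ interior K) (hpK : d.antistar p ∩ K ⊆ {d.pos y}) :
    ∃ d' : ArcDrawing ends X, d'.IsCrossingFree := by
  have hout (v) (hv : d.pos v ∈ K) : v = p ∨ v = y :=
    or_iff_not_imp_left.2 fun hvp => d.pos_injective (hpK ⟨d.pos_mem_antistar hvp, hv⟩)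
  have hfar (e : {e // ends e ≠ s(p, y)}) (he : p ∉ ends e) : d.arc e ∩ K ⊆ {d.pos y} :=
    (Set.inter_subset_inter_left K (d.arc_subset_antistar he)).trans hpK
  have hout' (v) (hv : v ≠ p) : d.pos v ∉ interior K := fun hvK =>
    hyK ((hout v (interior_subset hvK)).resolve_left hv ▸ hvK)
  have hnbr (e : {e // ends e ≠ s(p, y)}) (q) (hq : ends e = s(p, q)) : d.pos q ∉ K := fun hqK => by
    rcases hout q hqK with rfl | rfl
    exacts [(d.isArc hq).ne rfl, e.2 hq]
  obtain ⟨d₁, hd₁, hpos, hd₁far, hd₁near, -⟩ := hd.exists_straighten hK hKc hp hout' hnbr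
    fun e he => (hfar e he).trans (Set.singleton_subset_iff.2 ⟨y, rfl⟩)
  rw [← hpos] at hp hy hyK hout hfar hd₁near
  choose c hc _ hcpos hcK using hd₁near
  let T : Set X := Set.range fun e : {e : {e // ends e ≠ s(p, y)} // p ∈ ends e.1} => c e.1 e.2
  have hTK : T ⊆ K \ interior K := by
    rintro _ ⟨e, rfl⟩
    exact ⟨hKc.frontier_subset (hc _ e.2), (hc _ e.2).2⟩
  have hyT : d₁.pos y ∉ T := by
    rintro ⟨e, he⟩
    exact hcpos _ e.2 ⟨y, he.symm⟩
  obtain ⟨Q, hQ, hQK, hQQ, hQT⟩ := exists_pairwise_isArc_of_convex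
    (ι := {e // ends e = s(p, y)}) hX hK hp hy hyK (Set.finite_range _) hTK hyT
  have hpy : {d₁.pos p, d₁.pos y} ⊆ Set.range d₁.pos :=
    Set.insert_subset ⟨p, rfl⟩ (Set.singleton_subset_iff.2 ⟨y, rfl⟩)
  refine ⟨d₁.extend Q (fun {e a b} hab => ?_) (fun {e v} hv => ?_),
    hd₁.extend (fun e e' hee' => (hQQ hee').trans hpy) fun e e' z hz => ?_⟩
  · rcases Sym2.eq_iff.1 (e.2.symm.trans hab) with ⟨rfl, rfl⟩ | ⟨rfl, rfl⟩
    exacts [hQ e, (hQ e).symm]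
  · rw [e.2, Sym2.mem_iff]
    exact hout v (hQK e hv)
  · by_cases hpe : p ∈ ends e'.1
    · exact ⟨p, (hQT e _ ⟨⟨e', hpe⟩, rfl⟩ ⟨hz.1, (hcK e' hpe).subset ⟨hz.2, hQK e hz.1⟩⟩).symm⟩
    · exact ⟨y, (hfar e' hpe ⟨hd₁far e' hpe ▸ hz.2, hQK e hz.1⟩).symm⟩

end InsertParallel

section Radial

variable [NormedAddCommGroup X] [NormedSpace ℝ X] {ends : F → Sym2 W} {d : ArcDrawing ends X}

/- Near `y` the arcs can be made radial; then a radius through a point off the arcs that avoid `p`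
meets these arcs only in `y` itself. -/
lemma IsCrossingFree.exists_radial [Finite F] [Finite W] (hd : d.IsCrossingFree) (y : W) :
    ∃ D, Convex ℝ D ∧ IsClosed D ∧ d.pos y ∈ interior D ∧ (∀ v ≠ y, d.pos v ∉ D) ∧
      ∃ d' : ArcDrawing ends X, d'.IsCrossingFree ∧ d'.pos = d.pos ∧
        (∀ e, d'.arc e \ interior D ⊆ d.arc e) ∧
        ∀ p, ∀ b ∈ D \ d'.antistar p,
          segment ℝ (d.pos y) b ∩ d'.antistar p ⊆ {d.pos y} := by
  obtain ⟨r, hr, hrD⟩ := Metric.nhds_basis_closedBall.mem_iff.1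
    ((d.isClosed_antistar y).isOpen_compl.mem_nhds (d.pos_notMem_antistar y))
  let D := Metric.closedBall (d.pos y) r
  have hD : Convex ℝ D := convex_closedBall _ _
  have hyD : d.pos y ∈ interior D :=
    Metric.ball_subset_interior_closedBall (Metric.mem_ball_self hr)
  have hpos (v) (hv : v ≠ y) : d.pos v ∉ D := fun h => hrD h (d.pos_mem_antistar hv)
  have hfar (e) (he : y ∉ ends e) : d.arc e ∩ D ⊆ ∅ := fun z hz =>
    hrD hz.2 (d.arc_subset_antistar he hz.1)
  obtain ⟨d', hd', hpos', hd'far, hd'near, hd'D⟩ := hd.exists_straighten hD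
    Metric.isClosed_closedBall hyD (fun v hv h => hpos v hv (interior_subset h))
    (fun e q hq => hpos q fun h => (d.isArc hq).ne (h ▸ rfl))
    fun e he => (hfar e he).trans (Set.empty_subset _)
  refine ⟨D, hD, Metric.isClosed_closedBall, hyD, hpos, d', hd', hpos', hd'D, ?_⟩
  rintro p b ⟨hbD, hb⟩ z ⟨hzb, hz⟩
  have hzD : z ∈ D := hD.segment_subset (interior_subset hyD) hbD hzb
  rcases hz with ⟨v, -, rfl⟩ | hz
  · rw [hpos'] at hzD ⊢
    exact congrArg d.pos (by_contra fun hv => hpos v hv hzD)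
  obtain ⟨e, hpe, hze⟩ := Set.mem_iUnion₂.1 hz
  have hb : b ∉ d'.arc e := fun h => hb (d'.arc_subset_antistar hpe h)
  by_cases hye : y ∈ ends e
  · obtain ⟨c, hc, -, -, hcD⟩ := hd'near e hye
    have hseg : segment ℝ (d.pos y) c ⊆ d'.arc e := hcD ▸ Set.inter_subset_left
    by_contra hzy
    rcases mem_segment_or_mem_segment hzb (hcD.subset ⟨hze, hzD⟩) hzy with hbc | hcb
    · exact hb (hseg hbc)
    · have hcb := eq_of_mem_segment_of_notMem_interior hD hyD hbD hcb hc.2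
      exact hb (hseg (hcb ▸ right_mem_segment ℝ _ _))
  · exact (hfar e hye ⟨hd'far e hye ▸ hze, hzD⟩).elim

end Radial

section Insert

variable [NormedAddCommGroup X] [NormedSpace ℝ X] [ProperSpace X] {ends : F → Sym2 W} {p y : W}
  {d : ArcDrawing (fun e : {e // ends e ≠ s(p, y)} => ends e) X}

lemma IsCrossingFree.exists_insert_of_radial [Finite F] [Finite W] (hX : 1 < Module.rank ℝ X)
    (hd : d.IsCrossingFree) (hpy : p ≠ y) {D : Set X} (hD : D ∈ nhds (d.pos p))
    (hradial : ∀ b ∈ D \ d.antistar p, segment ℝ (d.pos y) b ∩ d.antistar p ⊆ {d.pos y}) :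
    ∃ d' : ArcDrawing ends X, d'.IsCrossingFree := by
  obtain ⟨ε, hε, hεD⟩ := Metric.nhds_basis_closedBall.mem_iff.1 <| Filter.inter_mem hD <|
    (d.isClosed_antistar p).isOpen_compl.mem_nhds (d.pos_notMem_antistar p)
  have hyε : d.pos y ∉ Metric.closedBall (d.pos p) ε := fun hy =>
    (hεD hy).2 (d.pos_mem_antistar hpy.symm)
  have hne : (Metric.closedBall (d.pos p) ε).Nonempty := Metric.nonempty_closedBall.2 hε.le
  refine hd.exists_insert_of_convex (K := convexJoin ℝ {d.pos y} (Metric.closedBall (d.pos p) ε)) hX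
    ((convex_singleton _).convexJoin (convex_closedBall _ _))
    (isCompact_convexJoin_singleton (isCompact_closedBall _ _) _).isClosed ?_
    (subset_convexJoin_left hne rfl)
    (notMem_interior_convexJoin_singleton (convex_closedBall _ _) hne hyε) ?_
  · exact interior_mono (subset_convexJoin_right (Set.singleton_nonempty _))
      (Metric.ball_subset_interior_closedBall (Metric.mem_ball_self hε))
  · rintro z ⟨hz, hzK⟩
    rw [convexJoin_singleton_left] at hzK
    obtain ⟨b, hb, hzb⟩ := Set.mem_iUnion₂.1 hzK
    exact hradial b (hεD hb) ⟨hzb, hz⟩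

/- Parallel edges can be drawn along a curve that crosses only arcs ending at `p`: pull `p` along
the curve towards `y`, dragging those arcs, until a convex neighbourhood of `p` sees `y`. -/
theorem IsCrossingFree.exists_insert [Finite F] [Finite W] (hX : 1 < Module.rank ℝ X)
    (hd : d.IsCrossingFree) {A : Set X} (hA : IsArc A (d.pos p) (d.pos y))
    (hAp : A ∩ d.antistar p ⊆ {d.pos y}) : ∃ d' : ArcDrawing ends X, d'.IsCrossingFree := by
  have hpy : p ≠ y := fun h => hA.ne (congrArg d.pos h)
  obtain ⟨D, hD, hDc, hyD, hposD, d₁, hd₁, hpos, hd₁D, hradial⟩ := hd.exists_radial y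
  have hantistar : d₁.antistar p \ interior D ⊆ d.antistar p := by
    rintro z ⟨⟨v, hv, rfl⟩ | hz, hzD⟩
    · rw [hpos]
      exact d.pos_mem_antistar hv
    · obtain ⟨e, he, hze⟩ := Set.mem_iUnion₂.1 hz
      exact d.arc_subset_antistar he (hd₁D e ⟨hze, hzD⟩)
  have hAR : Disjoint (A \ interior D) (d₁.antistar p) := Set.disjoint_left.2 fun z hz hzR =>
    hz.2 (hAp ⟨hz.1, hantistar ⟨hzR, hz.2⟩⟩ ▸ hyD)
  obtain ⟨h, hfix, hhp⟩ := hA.exists_homeomorph_apply_mem_interior hD hDc hyD (hposD p hpy)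
    (d₁.isClosed_antistar p) hAR
  rw [← hpos] at hradial hhp
  have hhy : h (d₁.pos y) = d₁.pos y := hfix _ (d₁.pos_mem_antistar hpy.symm)
  have hantistar_map : (d₁.map h).antistar p = d₁.antistar p := by
    rw [antistar_map]
    exact Set.EqOn.image_eq_self hfix
  refine (hd₁.map h).exists_insert_of_radial hX hpy (mem_interior_iff_mem_nhds.1 hhp.1) ?_
  rw [hantistar_map]
  change ∀ b ∈ D \ _, segment ℝ (h (d₁.pos y)) b ∩ _ ⊆ {h (d₁.pos y)}
  rw [hhy]
  exact hradial p

end Insert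

section Star

variable {ι : Type*} {ends : F → Sym2 W} {S : Finset F} {u : ι → W} {y : W} {q : X}
  {A : Set X} {L : ι → Set X}

/-- The ends of the edges of the multigraph obtained by deleting the edges in `S` and joining a new
vertex `none` to each of the vertices `u i`. -/
def starEnds (ends : F → Sym2 W) (S : Finset F) (u : ι → W) : {g // g ∉ S} ⊕ ι → Sym2 (Option W) :=
  Sum.elim (fun g => (ends g).map some) fun i => s(none, some (u i))

section Leg

variable [TopologicalSpace X] {d : ArcDrawing ends X}

/-- All crossings are between two edges of `S`. -/
def IsCrossingFreeOff (d : ArcDrawing ends X) (S : Finset F) : Prop :=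
  ∀ g ∉ S, ∀ g' ≠ g, d.arc g ∩ d.arc g' ⊆ Set.range d.pos

/-- `A` can serve, after the deletion of the edges in `S`, as an edge from a new vertex at `q` to
the vertex `v`: it is an arc between these points that runs inside the arcs of the edges in `S` and
meets no vertex other than `v`. -/
def IsLeg (d : ArcDrawing ends X) (S : Finset F) (q : X) (v : W) (A : Set X) : Prop :=
  IsArc A q (d.pos v) ∧ A ⊆ ⋃ f ∈ S, d.arc f ∧ ∀ w, d.pos w ∈ A → w = v

lemma IsLeg.of_subset {v : W} {c : X} {B : Set X} (hA : d.IsLeg S c v A)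
    (hB : IsArc B q (d.pos v)) (hBA : B ⊆ A) : d.IsLeg S q v B :=
  ⟨hB, hBA.trans hA.2.1, fun w hw => hA.2.2 w (hBA hw)⟩

lemma exists_isLeg_isLeg {f : F} {a b : W} (hfS : f ∈ S) (hf : ends f = s(a, b))
    (hqf : q ∈ d.arc f) (hq : q ∉ Set.range d.pos) :
    ∃ A B, d.IsLeg S q a A ∧ d.IsLeg S q b B ∧ A ∪ B = d.arc f ∧ A ∩ B = {q} := by
  have hqpos (v) : q ≠ d.pos v := fun h => hq ⟨v, h.symm⟩
  obtain ⟨A, B, hA, hB, hAB, hq⟩ := (d.isArc hf).exists_split hqf (hqpos a) (hqpos b)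
  have hfS : A ∪ B ⊆ ⋃ f ∈ S, d.arc f := hAB ▸ Set.subset_biUnion_of_mem (u := d.arc) hfS
  have hpos (w) (hw : d.pos w ∈ A ∪ B) : w = a ∨ w = b :=
    Sym2.mem_iff.1 (hf ▸ d.mem_ends (hAB.subset hw))
  refine ⟨A, B, ⟨hA.symm, Set.subset_union_left.trans hfS, fun w hw => ?_⟩,
    ⟨hB, Set.subset_union_right.trans hfS, fun w hw => ?_⟩, hAB, hq⟩
  · refine (hpos w (Or.inl hw)).resolve_right ?_
    rintro rfl
    exact hqpos w (hq.subset ⟨hw, hB.right_mem⟩).symm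
  · refine (hpos w (Or.inr hw)).resolve_left ?_
    rintro rfl
    exact hqpos w (hq.subset ⟨hA.left_mem, hw⟩).symm

lemma IsLeg.inter_arc_subset {v : W} {g : F} (hA : d.IsLeg S q v A) (hd : d.IsCrossingFreeOff S)
    (hg : g ∉ S) : A ∩ d.arc g ⊆ {d.pos v} := by
  rintro z ⟨hz, hzg⟩
  obtain ⟨f, hf, hzf⟩ := Set.mem_iUnion₂.1 (hA.2.1 hz)
  obtain ⟨w, rfl⟩ := hd g hg f (ne_of_mem_of_not_mem hf hg) ⟨hzg, hzf⟩
  exact congrArg d.pos (hA.2.2 w hz)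

/-- The drawing with a new vertex at `q` joined along `L i` to each vertex `u i` different from `y`,
the edges in `S` being deleted. -/
def star (d : ArcDrawing ends X) (hq : q ∉ Set.range d.pos) (hqS : ∀ g ∉ S, q ∉ d.arc g)
    (hL : ∀ i, u i ≠ y → d.IsLeg S q (u i) (L i)) :
    ArcDrawing (fun e : {e // starEnds ends S u e ≠ s(none, some y)} => starEnds ends S u e) X where
  pos o := o.elim q d.pos
  arc e := Sum.elim (fun g => d.arc g.1) L e.1
  pos_injective := by
    rintro (_ | v) (_ | w) h
    exacts [rfl, (hq ⟨w, h.symm⟩).elim, (hq ⟨v, h⟩).elim, congrArg some (d.pos_injective h)]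
  isArc {e a b} hab := by
    obtain ⟨g | i, he⟩ := e
    · induction hg : ends g with
      | h v w =>
        simp only [starEnds, Sum.elim_inl, hg, Sym2.map_mk] at hab
        rcases Sym2.eq_iff.1 hab with ⟨rfl, rfl⟩ | ⟨rfl, rfl⟩
        exacts [d.isArc hg, (d.isArc hg).symm]
    · have hi := hL i (fun h => he (h ▸ rfl))
      rcases Sym2.eq_iff.1 hab with ⟨rfl, rfl⟩ | ⟨rfl, rfl⟩
      exacts [hi.1, hi.1.symm]
  mem_ends {e v} hv := by
    obtain ⟨⟨g, hg⟩ | i, he⟩ := e <;> obtain _ | v := v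
    · exact (hqS g hg hv).elim
    · exact Sym2.mem_map.2 ⟨v, d.mem_ends hv, rfl⟩
    · exact Sym2.mem_mk_left _ _
    · exact ((hL i (fun h => he (h ▸ rfl))).2.2 v hv) ▸ Sym2.mem_mk_right _ _

lemma IsCrossingFreeOff.star (hd : d.IsCrossingFreeOff S) (hq : q ∉ Set.range d.pos)
    (hqS : ∀ g ∉ S, q ∉ d.arc g) (hL : ∀ i, u i ≠ y → d.IsLeg S q (u i) (L i))
    (hLL : ∀ i j, i ≠ j → u i ≠ y → u j ≠ y → L i ∩ L j ⊆ {q}) :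
    (d.star hq hqS hL).IsCrossingFree := by
  have hsome : Set.range d.pos ⊆ Set.range (d.star hq hqS hL).pos := by
    rintro _ ⟨v, rfl⟩
    exact ⟨some v, rfl⟩
  have hleg {i g} (hi : u i ≠ y) (hg : g ∉ S) : L i ∩ d.arc g ⊆ Set.range d.pos :=
    ((hL i hi).inter_arc_subset hd hg).trans (Set.singleton_subset_iff.2 ⟨u i, rfl⟩)
  rintro ⟨⟨g, hg⟩ | i, he⟩ ⟨⟨g', hg'⟩ | j, he'⟩ hne
  · exact (hd g hg g' fun h => hne (by simp only [h])).trans hsome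
  · exact Set.inter_comm _ _ ▸ (hleg (fun h => he' (h ▸ rfl)) hg).trans hsome
  · exact (hleg (fun h => he (h ▸ rfl)) hg').trans hsome
  · exact (hLL i j (fun h => hne (by simp only [h])) (fun h => he (h ▸ rfl))
      fun h => he' (h ▸ rfl)).trans (Set.singleton_subset_iff.2 ⟨none, rfl⟩)

end Leg

theorem IsCrossingFreeOff.exists_star [NormedAddCommGroup X] [NormedSpace ℝ X] [ProperSpace X]
    [Finite F] [Finite W] [Finite ι] (hX : 1 < Module.rank ℝ X) {d : ArcDrawing ends X}
    (hd : d.IsCrossingFreeOff S) (hq : q ∉ Set.range d.pos) (hA : d.IsLeg S q y A)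
    (hL : ∀ i, u i ≠ y → d.IsLeg S q (u i) (L i))
    (hLL : ∀ i j, i ≠ j → u i ≠ y → u j ≠ y → L i ∩ L j ⊆ {q}) :
    ∃ d' : ArcDrawing (starEnds ends S u) X, d'.IsCrossingFree := by
  have hqS (g) (hg : g ∉ S) : q ∉ d.arc g := fun hqg =>
    hA.1.ne (hA.inter_arc_subset hd hg ⟨hA.1.left_mem, hqg⟩)
  refine (hd.star hq hqS hL hLL).exists_insert hX hA.1 ?_
  rintro z ⟨hz, ⟨_ | v, hv, rfl⟩ | hzarc⟩
  · exact (hv rfl).elim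
  · exact congrArg d.pos (hA.2.2 v hz)
  · obtain ⟨⟨⟨g, hg⟩ | i, he⟩, hne, hzarc⟩ := Set.mem_iUnion₂.1 hzarc
    · exact hA.inter_arc_subset hd hg ⟨hz, hzarc⟩
    · exact (hne (Sym2.mem_mk_left _ _)).elim

/-- The drawing obtained by keeping only the edges that satisfy `P`. -/
def restrict [TopologicalSpace X] (d : ArcDrawing ends X) (P : F → Prop) :
    ArcDrawing (fun e : {e // P e} => ends e) X where
  pos := d.pos
  arc e := d.arc e
  pos_injective := d.pos_injective
  isArc := d.isArc
  mem_ends := d.mem_ends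

theorem IsCrossingFreeOff.exists_isCrossingFree_of_parallel [NormedAddCommGroup X]
    [NormedSpace ℝ X] [ProperSpace X] [Finite F] [Finite W] (hX : 1 < Module.rank ℝ X)
    {d : ArcDrawing ends X} (hd : d.IsCrossingFreeOff S) {p : W} (hS : ∀ f ∈ S, ends f = s(p, y))
    {f : F} (hf : f ∈ S) : ∃ d' : ArcDrawing ends X, d'.IsCrossingFree := by
  have hinter {g} (hg : ends g ≠ s(p, y)) {g'} (hgg' : g' ≠ g) :
      d.arc g ∩ d.arc g' ⊆ Set.range d.pos := hd g (mt (hS g) hg) g' hgg'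
  have hr : (d.restrict (ends · ≠ s(p, y))).IsCrossingFree := fun g g' hgg' =>
    hinter g.2 fun h => hgg' (Subtype.ext h.symm)
  refine hr.exists_insert hX (d.isArc (hS f hf)) ?_
  have hy {v} (hvp : v ≠ p) (hv : d.pos v ∈ d.arc f) : d.pos v = d.pos y := by
    have hv := d.mem_ends hv
    rw [hS f hf, Sym2.mem_iff] at hv
    exact congrArg d.pos (hv.resolve_left hvp)
  rintro z ⟨hzf, ⟨v, hvp, rfl⟩ | hz⟩
  · exact hy hvp hzf
  · obtain ⟨g, hpg, hzg⟩ := Set.mem_iUnion₂.1 hz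
    obtain ⟨v, rfl⟩ := hinter g.2 (fun h => g.2 (h ▸ hS f hf)) ⟨hzg, hzf⟩
    refine hy ?_ hzf
    rintro rfl
    exact hpg (d.mem_ends hzg)

end Star

end ArcDrawing

namespace Multigraph

section Incidence

variable {V E : Type} [DecidableEq V] (G : Multigraph V E)

lemma cut_compl [Fintype V] [Fintype E] (A : Finset V) : G.cut Aᶜ = G.cut A := by
  simp only [cut, mem_compl, not_iff_not]

/-- The oriented incidence number modulo 3 of the vertex `v` and the edge `e`, when `e` is directed
from `fst e` to `snd e`. -/
def incidence (v : V) (e : E) : ZMod 3 :=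
  (if G.fst e = v then 1 else 0) - if G.snd e = v then 1 else 0

lemma sum_incidence [Fintype V] (e : E) : ∑ v, G.incidence v e = 0 := by
  simp [incidence]

lemma outDeg_sub_inDeg [Fintype E] (D : E → Bool) (v : V) :
    ((G.outDeg D v - G.inDeg D v : ℤ) : ZMod 3) =
      ∑ e, (if D e then 1 else -1) * G.incidence v e := by
  simp only [outDeg, inDeg, card_filter, Nat.cast_sum, Int.cast_sub, Int.cast_sum,
    ← sum_sub_distrib]
  refine sum_congr rfl fun e _ => ?_
  cases h : D e <;> simp [tail, head, incidence, h]

variable {G}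

lemma EdgeConnected.z3Connected_of_isEmpty [Fintype V] [Fintype E] [IsEmpty E] {k : ℕ}
    (hG : G.EdgeConnected k) (hk : 0 < k) : G.Z3Connected := by
  refine fun β hβ => ⟨isEmptyElim, fun v => ?_⟩
  have huniv : {v} = univ := by
    by_contra hv
    have hcut := hG {v} (singleton_nonempty v) hv
    rw [eq_empty_of_isEmpty (G.cut {v}), card_empty] at hcut
    omega
  rw [IsBoundary, ← huniv, sum_singleton] at hβ
  rw [outDeg_sub_inDeg, univ_eq_empty, sum_empty, hβ]

end Incidence

section StarG

variable {V E : Type} {n : ℕ}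

/-- The multigraph obtained by deleting the edges in `S` and joining a new vertex `none` to each of
the vertices `u i`. -/
def starG (G : Multigraph V E) (S : Finset E) (u : Fin n → V) :
    Multigraph (Option V) ({g // g ∉ S} ⊕ Fin n) where
  fst := Sum.elim (fun g => some (G.fst g)) fun _ => none
  snd := Sum.elim (fun g => some (G.snd g)) fun i => some (u i)
  no_loop := by
    rintro (g | i)
    · exact (Option.some_injective V).ne (G.no_loop g)
    · exact (Option.some_ne_none _).symm

variable [DecidableEq V] {G : Multigraph V E} {S : Finset E} {u : Fin n → V}

lemma incidence_starG_inl (v : V) (g : {g // g ∉ S}) :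
    (G.starG S u).incidence (some v) (Sum.inl g) = G.incidence v g := by
  simp [incidence, starG]

lemma incidence_starG_inr (v : V) (i : Fin n) :
    (G.starG S u).incidence (some v) (Sum.inr i) = -if u i = v then 1 else 0 := by
  simp [incidence, starG]

variable [Fintype E] [DecidableEq E]

variable (G S u) in
lemma degree_starG_none : (G.starG S u).degree none = n := by
  rw [degree, card_filter, Fintype.sum_sum_type]
  simp [Incident, starG]

lemma card_cut_starG {A : Finset (Option V)} (hA : none ∉ A) :
    ((G.starG S u).cut A).card =
      (G.cut (eraseNone A) \ S).card + #{i | u i ∈ eraseNone A} := by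
  have hcut : G.cut (eraseNone A) \ S =
      {g ∈ Sᶜ | ¬ (G.fst g ∈ eraseNone A ↔ G.snd g ∈ eraseNone A)} := by
    ext g
    simp only [cut, mem_sdiff, mem_filter, mem_univ, true_and, mem_compl, and_comm]
  rw [hcut, cut, card_filter, Fintype.sum_sum_type, card_filter, card_filter,
    sum_subtype Sᶜ (F := inferInstance) fun g => mem_compl]
  refine congrArg₂ (· + ·) (sum_congr rfl fun g _ => ?_) ?_
  · simp only [starG, Sum.elim_inl, mem_eraseNone]
    congr
  · simp [starG, hA]

variable [Fintype V]

lemma EdgeConnected.starG {k : ℕ} (hG : G.EdgeConnected k) (hkn : k ≤ n)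
    (hS : ∀ B : Finset V, (S ∩ G.cut B).card ≤ #{i | u i ∈ B}) :
    (G.starG S u).EdgeConnected k := by
  have of_none_notMem (A : Finset (Option V)) (hA : A.Nonempty) (hnone : none ∉ A) :
      k ≤ ((G.starG S u).cut A).card := by
    rw [card_cut_starG hnone]
    by_cases hB : eraseNone A = univ
    · simpa [hB] using hkn.trans (Nat.le_add_left _ _)
    · have hne : (eraseNone A).Nonempty := by
        obtain ⟨_ | v, hv⟩ := hA
        exacts [(hnone hv).elim, ⟨v, mem_eraseNone.2 hv⟩]
      have hcut := hG _ hne hB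
      have hS := hS (eraseNone A)
      rw [inter_comm] at hS
      have := card_sdiff_add_card_inter (G.cut (eraseNone A)) S
      omega
  intro A hA hAuniv
  by_cases hnone : none ∈ A
  · rw [← cut_compl]
    refine of_none_notMem _ (nonempty_iff_ne_empty.2 ?_) (by simpa only [mem_compl, not_not])
    rwa [Ne, compl_eq_empty_iff]
  · exact of_none_notMem A hA hnone

/- Orient the edges in `S` from `fst` to `snd` and the new edges away from the new vertex, and
correct the boundary accordingly. -/
lemma Z3ExtendableAt.z3Connected_of_starG (h : (G.starG S u).Z3ExtendableAt none) :
    G.Z3Connected := by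
  intro β hβ
  let β' : Option V → ZMod 3 := fun o => o.elim n fun v =>
    β v - ∑ g ∈ S, G.incidence v g - ∑ i, if u i = v then 1 else 0
  have hβ' : IsBoundary β' := by
    rw [IsBoundary] at hβ ⊢
    simp only [β', Fintype.sum_option, Option.elim_none, Option.elim_some, sum_sub_distrib, hβ]
    rw [sum_comm, sum_congr rfl fun g _ => G.sum_incidence g, sum_comm]
    simp
  obtain ⟨D, hDnone, hD⟩ := h β' hβ' (fun _ => true) (by
    rw [outDeg_sub_inDeg, Fintype.sum_sum_type]
    simp [incidence, starG, β'])
  have hDinr (i) : D (Sum.inr i) = true := hDnone _ (Or.inl rfl)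
  refine ⟨fun g => if hg : g ∈ S then true else D (Sum.inl ⟨g, hg⟩), fun v => ?_⟩
  have hv := hD (some v)
  simp only [outDeg_sub_inDeg, Fintype.sum_sum_type, incidence_starG_inl, incidence_starG_inr,
    hDinr, if_true, one_mul, sum_neg_distrib, β', Option.elim_some] at hv
  rw [outDeg_sub_inDeg, ← sum_add_sum_compl S,
    sum_subtype Sᶜ (F := inferInstance) fun g => mem_compl]
  have hS : ∑ g ∈ S, (if (if hg : g ∈ S then true else D (Sum.inl ⟨g, hg⟩)) then (1 : ZMod 3)
      else -1) * G.incidence v g = ∑ g ∈ S, G.incidence v g :=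
    sum_congr rfl fun g hg => by rw [dif_pos hg, if_pos rfl, one_mul]
  have hSc (g : {g // g ∉ S}) :
      (if hg : g.1 ∈ S then true else D (Sum.inl ⟨g, hg⟩)) = D (Sum.inl g) := dif_neg g.2
  simp only [hS, hSc]
  linear_combination hv

end StarG

section Drawing

variable {V E : Type} {G : Multigraph V E}

/-- The unordered pair of ends of an edge. -/
def ends (G : Multigraph V E) (e : E) : Sym2 V :=
  s(G.fst e, G.snd e)

lemma ends_starG (S : Finset E) {n : ℕ} (u : Fin n → V) :
    (G.starG S u).ends = ArcDrawing.starEnds G.ends S u := by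
  ext (g | i) <;> rfl

lemma Drawing.image_Icc_sdiff_range (d : Drawing G) (e : E) :
    d.arc e '' Set.Icc 0 1 \ Set.range d.vpos = d.arc e '' Set.Ioo 0 1 := by
  refine Set.Subset.antisymm ?_ fun z hz => ⟨Set.image_mono Set.Ioo_subset_Icc_self hz, ?_⟩
  · rintro _ ⟨⟨t, ht, rfl⟩, hpos⟩
    rcases Set.eq_endpoints_or_mem_Ioo_of_mem_Icc ht with rfl | rfl | ht
    · exact (hpos ⟨_, (d.arc_zero e).symm⟩).elim
    · exact (hpos ⟨_, (d.arc_one e).symm⟩).elim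
    · exact ⟨t, ht, rfl⟩
  · rintro ⟨v, rfl⟩
    exact d.vertex_not_interior e v hz

/-- The drawing with each parametrized arc replaced by its image. -/
def Drawing.toArcDrawing (d : Drawing G) : ArcDrawing G.ends (ℝ × ℝ) where
  pos := d.vpos
  arc e := d.arc e '' Set.Icc 0 1
  pos_injective := d.vpos_injective
  isArc {e a b} hab := by
    have harc := isArc_image_Icc (d.arc_continuous e) (d.arc_injOn e)
    rw [d.arc_zero, d.arc_one] at harc
    rcases Sym2.eq_iff.1 hab with ⟨rfl, rfl⟩ | ⟨rfl, rfl⟩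
    exacts [harc, harc.symm]
  mem_ends {e v} := by
    rintro ⟨t, ht, hv⟩
    rcases Set.eq_endpoints_or_mem_Ioo_of_mem_Icc ht with rfl | rfl | ht
    · exact d.vpos_injective (hv.symm.trans (d.arc_zero e)) ▸ Sym2.mem_mk_left _ _
    · exact d.vpos_injective (hv.symm.trans (d.arc_one e)) ▸ Sym2.mem_mk_right _ _
    · exact (d.vertex_not_interior e v ⟨t, ht, hv⟩).elim

lemma Drawing.mem_crossings_iff {d : Drawing G} {e f : E} : (e, f) ∈ d.crossings ↔ e ≠ f ∧
    ¬ d.toArcDrawing.arc e ∩ d.toArcDrawing.arc f ⊆ Set.range d.toArcDrawing.pos := by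
  change _ ∧ (d.arc e '' Set.Ioo 0 1 ∩ d.arc f '' Set.Ioo 0 1).Nonempty ↔ _
  rw [← d.image_Icc_sdiff_range, ← d.image_Icc_sdiff_range, ← Set.sdiff_inter_distrib_right,
    Set.sdiff_nonempty]
  rfl

lemma exists_drawing_toArcDrawing_eq (d : ArcDrawing G.ends (ℝ × ℝ)) :
    ∃ d' : Drawing G, d'.toArcDrawing = d := by
  choose γ hγ hinj h₀ h₁ himage using fun e => (d.isArc (e := e) rfl).exists_eq_image_Icc
  have vertex_not_interior (e v) : d.pos v ∉ γ e '' Set.Ioo 0 1 := by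
    rintro ⟨t, ht, htv⟩
    have htI := Set.Ioo_subset_Icc_self ht
    have hv : d.pos v ∈ d.arc e := himage e ▸ ⟨t, htI, htv⟩
    rcases Sym2.mem_iff.1 (d.mem_ends hv) with rfl | rfl
    · exact ht.1.ne (hinj e (Set.left_mem_Icc.2 zero_le_one) htI ((h₀ e).trans htv.symm))
    · exact ht.2.ne (hinj e htI (Set.right_mem_Icc.2 zero_le_one) (htv.trans (h₁ e).symm))
  refine ⟨⟨d.pos, γ, hγ, hinj, h₀, h₁, d.pos_injective, vertex_not_interior⟩, ?_⟩
  obtain ⟨⟩ := d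
  simp only [Drawing.toArcDrawing, himage]

theorem planar_of_exists_isCrossingFree (h : ∃ d : ArcDrawing G.ends (ℝ × ℝ), d.IsCrossingFree) :
    G.Planar := by
  obtain ⟨d, hd⟩ := h
  obtain ⟨d, rfl⟩ := exists_drawing_toArcDrawing_eq d
  refine ⟨d, Set.eq_empty_iff_forall_notMem.2 fun ⟨e, f⟩ hef => ?_⟩
  obtain ⟨hne, hef⟩ := Drawing.mem_crossings_iff.1 hef
  exact hef (hd hne)

theorem CrossingNumberLE1.exists_arcDrawing [DecidableEq E] (hG : G.CrossingNumberLE1) :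
    ∃ d : ArcDrawing G.ends (ℝ × ℝ), d.IsCrossingFree ∨ ∃ e f, d.IsCrossingFreeOff {e, f} ∧
      ∃ c ∈ d.arc e ∩ d.arc f, c ∉ Set.range d.pos := by
  obtain ⟨d, hd⟩ := hG
  refine ⟨d.toArcDrawing, or_iff_not_imp_left.2 fun hcross => ?_⟩
  rw [ArcDrawing.IsCrossingFree, Pairwise] at hcross
  push Not at hcross
  obtain ⟨e, f, hef, hcross⟩ := hcross
  refine ⟨e, f, fun g hg g' hg' => ?_, Set.not_subset.1 hcross⟩
  by_contra hgg'
  rw [mem_insert, mem_singleton, not_or] at hg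
  rcases hd _ (Drawing.mem_crossings_iff.2 ⟨hg'.symm, hgg'⟩) _
    (Drawing.mem_crossings_iff.2 ⟨hef, hcross⟩) with h | h
  exacts [hg.1 (congrArg Prod.fst h), hg.2 (congrArg Prod.fst h)]

end Drawing

end Multigraph

namespace ArcDrawing

section StarAtCrossing

variable {F W X : Type*} [Finite F] [Finite W] [NormedAddCommGroup X] [NormedSpace ℝ X]
  [ProperSpace X] {ends : F → Sym2 W} {d : ArcDrawing ends X}

theorem IsCrossingFree.exists_star_singleton (hX : 1 < Module.rank ℝ X) (hd : d.IsCrossingFree)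
    {f : F} {a b : W} (hf : ends f = s(a, b)) (n : ℕ) :
    ∃ d' : ArcDrawing (starEnds ends {f} (Fin.cons a fun _ : Fin n => b)) X, d'.IsCrossingFree := by
  have hf' := d.isArc hf
  obtain ⟨q, hqf, hqa, hqb⟩ := hf'.exists_mem_ne_ne
  have hq : q ∉ Set.range d.pos := by
    rintro ⟨v, rfl⟩
    rcases Sym2.mem_iff.1 (hf ▸ d.mem_ends hqf) with rfl | rfl
    exacts [hqa rfl, hqb rfl]
  obtain ⟨A, B, hA, hB, -, -⟩ := exists_isLeg_isLeg (mem_singleton_self f) hf hqf hq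
  have hd : d.IsCrossingFreeOff {f} := fun g _ g' hgg' => hd hgg'.symm
  refine hd.exists_star (L := fun _ => A) hX hq hB (fun i hi => ?_) fun i j hij hi hj => ?_
  · cases i using Fin.cases with
    | zero => exact hA
    | succ i => exact (hi rfl).elim
  · cases i using Fin.cases with
    | zero =>
      cases j using Fin.cases with
      | zero => exact (hij rfl).elim
      | succ j => exact (hj rfl).elim
    | succ i => exact (hi rfl).elim

/- The new vertex is placed at the last point `q` of the arc of `f` that lies on the arc of `e`, so
that only the edges from `q` to `y₁` have to cross the arc of `e`. -/
theorem IsCrossingFreeOff.exists_star_pair [DecidableEq F] (hX : 1 < Module.rank ℝ X) {e f : F}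
    (hd : d.IsCrossingFreeOff {e, f}) {x₁ x₂ y₁ y₂ : W} (he : ends e = s(x₁, x₂))
    (hf : ends f = s(y₁, y₂)) (hy₂ : y₂ ∉ ends e) {c : X} (hc : c ∈ d.arc e ∩ d.arc f)
    (hcpos : c ∉ Set.range d.pos) :
    ∃ d' : ArcDrawing (starEnds ends {e, f} ![x₁, x₂, y₂, y₁, y₁]) X, d'.IsCrossingFree := by
  have heS : e ∈ ({e, f} : Finset F) := mem_insert_self e {f}
  have hfS : f ∈ ({e, f} : Finset F) := mem_insert_of_mem (mem_singleton_self f)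
  obtain ⟨C', C, -, hC, hCf, -⟩ := exists_isLeg_isLeg hfS hf hc.2 hcpos
  obtain ⟨q, hqC, B, hBC, hB, hBe⟩ := hC.1.exists_last_exit (d.isCompact_arc e).isClosed hc.1
    (mt d.mem_ends hy₂)
  have hqe : q ∈ d.arc e := (hBe.symm.subset rfl).2
  have hq : q ∉ Set.range d.pos := by
    rintro ⟨v, rfl⟩
    exact hy₂ (hC.2.2 v hqC ▸ d.mem_ends hqe)
  obtain ⟨A₁, A₂, hA₁, hA₂, hAe, hA⟩ := exists_isLeg_isLeg heS he hqe hq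
  obtain ⟨A, -, hy₁, -⟩ := exists_isLeg_isLeg hfS hf (hCf.subset (Or.inr hqC)) hq
  have hB := hC.of_subset hB hBC
  have hA₁B : A₁ ∩ B ⊆ {q} := fun z hz => hBe.subset ⟨hz.2, hAe.subset (Or.inl hz.1)⟩
  have hA₂B : A₂ ∩ B ⊆ {q} := fun z hz => hBe.subset ⟨hz.2, hAe.subset (Or.inr hz.1)⟩
  refine hd.exists_star (L := ![A₁, A₂, B, ∅, ∅]) hX hq hy₁ (fun i hi => ?_) fun i j hij hi hj => ?_
  · fin_cases i
    exacts [hA₁, hA₂, hB, (hi rfl).elim, (hi rfl).elim]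
  · wlog hlt : i < j generalizing i j
    · exact Set.inter_comm _ _ ▸ this j i hij.symm hj hi (hij.lt_or_gt.resolve_left hlt)
    fin_cases i <;> fin_cases j <;>
      first
        | exact absurd hlt (by decide)
        | exact (hj rfl).elim
        | exact hA.subset
        | assumption

end StarAtCrossing

end ArcDrawing

lemma one_lt_rank_real_prod_real : 1 < Module.rank ℝ (ℝ × ℝ) := by
  simp [one_add_one_eq_two]

namespace Multigraph

section Planarization

variable {V E : Type} {G : Multigraph V E}

lemma mem_cut_iff [DecidableEq V] [Fintype E] {e : E} {a b : V} (he : G.ends e = s(a, b))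
    (B : Finset V) : e ∈ G.cut B ↔ ¬ (a ∈ B ↔ b ∈ B) := by
  rw [cut, mem_filter_univ]
  rcases Sym2.eq_iff.1 he with ⟨rfl, rfl⟩ | ⟨rfl, rfl⟩
  exacts [Iff.rfl, not_congr Iff.comm]

lemma card_singleton_inter_cut_le [DecidableEq V] [Fintype E] [DecidableEq E] {f : E} {a b : V}
    (hf : G.ends f = s(a, b)) {n : ℕ} (hn : n ≠ 0) (B : Finset V) :
    ({f} ∩ G.cut B).card ≤ #{i | (Fin.cons a fun _ : Fin n => b : Fin (n + 1) → V) i ∈ B} := by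
  rw [← filter_mem_eq_inter, card_filter, sum_singleton, card_filter, Fin.sum_univ_succ]
  simp only [mem_cut_iff hf, Fin.cons_zero, Fin.cons_succ]
  by_cases ha : a ∈ B <;> by_cases hb : b ∈ B <;> simp [ha, hb, Nat.one_le_iff_ne_zero, hn]

lemma card_pair_inter_cut_le [DecidableEq V] [Fintype E] [DecidableEq E] {e f : E}
    {x₁ x₂ y₁ y₂ : V} (he : G.ends e = s(x₁, x₂)) (hf : G.ends f = s(y₁, y₂)) (B : Finset V) :
    ({e, f} ∩ G.cut B).card ≤ #{i | ![x₁, x₂, y₂, y₁, y₁] i ∈ B} := by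
  have htwo := card_le_two (a := e) (b := f)
  rw [card_filter, Fin.sum_univ_five, ← filter_mem_eq_inter, filter_insert, filter_singleton]
  simp only [mem_cut_iff he, mem_cut_iff hf]
  by_cases hx₁ : x₁ ∈ B <;> by_cases hx₂ : x₂ ∈ B <;> by_cases hy₁ : y₁ ∈ B <;>
    by_cases hy₂ : y₂ ∈ B <;> simp [hx₁, hx₂, hy₁, hy₂] <;> omega

variable [Finite V] [DecidableEq V] [Fintype E] [DecidableEq E]

lemma exists_planar_starG_of_isCrossingFree [Nonempty E] {d : ArcDrawing G.ends (ℝ × ℝ)}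
    (hd : d.IsCrossingFree) : ∃ (S : Finset E) (u : Fin 5 → V),
      (G.starG S u).Planar ∧ ∀ B, (S ∩ G.cut B).card ≤ #{i | u i ∈ B} := by
  obtain ⟨f⟩ := ‹Nonempty E›
  have hplanar := hd.exists_star_singleton one_lt_rank_real_prod_real (f := f) rfl 4
  rw [← ends_starG] at hplanar
  exact ⟨_, _, planar_of_exists_isCrossingFree hplanar,
    card_singleton_inter_cut_le rfl four_ne_zero⟩

lemma exists_planar_starG_of_isCrossingFreeOff {d : ArcDrawing G.ends (ℝ × ℝ)} {e f : E}
    (hd : d.IsCrossingFreeOff {e, f}) {c : ℝ × ℝ} (hc : c ∈ d.arc e ∩ d.arc f)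
    (hcpos : c ∉ Set.range d.pos) : ∃ (S : Finset E) (u : Fin 5 → V),
      (G.starG S u).Planar ∧ ∀ B, (S ∩ G.cut B).card ≤ #{i | u i ∈ B} := by
  by_cases hef : ∃ y ∈ G.ends f, y ∉ G.ends e
  · obtain ⟨y₂, hf, he⟩ := hef
    obtain ⟨y₁, hf⟩ := Sym2.mem_iff_exists.1 hf
    rw [Sym2.eq_swap] at hf
    have hplanar := hd.exists_star_pair one_lt_rank_real_prod_real rfl hf he hc hcpos
    rw [← ends_starG] at hplanar
    exact ⟨_, _, planar_of_exists_isCrossingFree hplanar, card_pair_inter_cut_le rfl hf⟩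
  · push Not at hef
    have he : G.ends e = s(G.fst f, G.snd f) := (Sym2.mem_and_mem_iff (G.no_loop f)).1
      ⟨hef _ (Sym2.mem_mk_left _ _), hef _ (Sym2.mem_mk_right _ _)⟩
    have hpar : ∀ g ∈ ({e, f} : Finset E), G.ends g = G.ends f := by
      rw [forall_mem_insert]
      exact ⟨he, fun g hg => by rw [mem_singleton.1 hg]⟩
    obtain ⟨d', hd'⟩ := hd.exists_isCrossingFree_of_parallel one_lt_rank_real_prod_real hpar
      (mem_insert_self e {f})
    have : Nonempty E := ⟨e⟩
    exact exists_planar_starG_of_isCrossingFree hd'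

theorem CrossingNumberLE1.exists_planar_starG [Nonempty E] (hG : G.CrossingNumberLE1) :
    ∃ (S : Finset E) (u : Fin 5 → V),
      (G.starG S u).Planar ∧ ∀ B, (S ∩ G.cut B).card ≤ #{i | u i ∈ B} := by
  obtain ⟨d, hd | ⟨e, f, hd, c, hc, hcpos⟩⟩ := hG.exists_arcDrawing
  exacts [exists_planar_starG_of_isCrossingFree hd,
    exists_planar_starG_of_isCrossingFreeOff hd hc hcpos]

end Planarization

/-- If every 5-edge-connected planar graph is `ℤ₃`-extendable at every vertex
of degree 5, then every 5-edge-connected graph with crossing number at most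
one is `ℤ₃`-connected. -/
theorem stmt_16
    (hyp : ∀ (V E : Type) [Fintype V] [DecidableEq V] [Fintype E] [DecidableEq E] (G : Multigraph V E) (x : V),
      G.Planar → G.EdgeConnected 5 → G.degree x = 5 → G.Z3ExtendableAt x)
    {V E : Type} [Fintype V] [DecidableEq V] [Fintype E] [DecidableEq E] (G : Multigraph V E)
    (hcr : G.CrossingNumberLE1) (h5 : G.EdgeConnected 5) :
    G.Z3Connected := by
  cases isEmpty_or_nonempty E with
  | inl _ => exact h5.z3Connected_of_isEmpty (by norm_num)
  | inr _ =>
    obtain ⟨S, u, hplanar, hcut⟩ := hcr.exists_planar_starG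
    exact (hyp _ _ (G.starG S u) none hplanar (h5.starG le_rfl hcut)
      (G.degree_starG_none S u)).z3Connected_of_starG

end Multigraph
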